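/- arXiv:1402.6817 — 2 statements merged into one kernel-verified Lean document; each statement's English description precedes it below -/
import Mathlib

section
/- Let A be a Hadamard matrix of order h ≥ 4, let d ≥ 1, and for each B ∈ {−1,1}^{h×d} define C by c_{ij} = sgn((AᵀB)_{ji}), F = C A⁻¹ B, and G = F + I. Then, averaging over all 2^{hd} equally likely choices of B: E[g_{ii}] = 1 + 2^{−h}·h·binom(h, h/2); E[g_{ij}] = 0 for i ≠ j; Var[g_{ii}] = 1 + h(h−1)·2^{−(h+1)}·binom(h/2, h/4)² − h²·2^{−2h}·binom(h, h/2)²; and Var[g_{ij}] = 1 for i ≠ j. -/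
open Matrix

/-- The `±1` sign function: `sgn x = 1` if `x ≥ 0`, `−1` if `x < 0`. -/
noncomputable def sgn (x : ℝ) : ℝ := if 0 ≤ x then 1 else -1

/-- The `h × d` sign matrix corresponding to a Boolean matrix `b`. -/
noncomputable def signMat {h d : ℕ} (b : Fin h → Fin d → Bool) :
    Matrix (Fin h) (Fin d) ℝ :=
  Matrix.of fun i j => if b i j then (1 : ℝ) else -1

/-- The matrix `C` with `c_{ij} = sgn((Aᵀ B)_{ji})`. -/
noncomputable def Cmat {h d : ℕ} (A : Matrix (Fin h) (Fin h) ℝ)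
    (B : Matrix (Fin h) (Fin d) ℝ) : Matrix (Fin d) (Fin h) ℝ :=
  Matrix.of fun i j => sgn ((Aᵀ * B) j i)

/-- The matrix `F = C A⁻¹ B`. -/
noncomputable def Fmat {h d : ℕ} (A : Matrix (Fin h) (Fin h) ℝ)
    (B : Matrix (Fin h) (Fin d) ℝ) : Matrix (Fin d) (Fin d) ℝ :=
  Cmat A B * A⁻¹ * B

/-- Expectation of `f(B)`, averaged over the `2^(h·d)` equally likely
`h × d` matrices `B` with entries in `{−1, 1}`. -/
noncomputable def expec (h d : ℕ) (f : Matrix (Fin h) (Fin d) ℝ → ℝ) : ℝ :=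
  (∑ b : Fin h → Fin d → Bool, f (signMat b)) / 2 ^ (h * d)



def sg (b : Bool) : ℤ := if b then 1 else -1

def SS {κ : Type} [Fintype κ] (b : κ → Bool) : ℤ := ∑ i, sg (b i)

lemma avg_aux {ι V : Type} [Fintype ι] [DecidableEq ι] [Fintype V]
    (i : ι) (ψ : (ι → V) → ℝ) :
    ∑ c : ι → V, ∑ v : V, ψ (Function.update c i v) = (Fintype.card V : ℝ) * ∑ c, ψ c := by
  have key : ∑ x : (ι → V) × V, ψ (Function.update x.1 i x.2) = ∑ x : (ι → V) × V, ψ x.1 := by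
    refine Finset.sum_bij' (fun x _ => (Function.update x.1 i x.2, x.1 i))
      (fun x _ => (Function.update x.1 i x.2, x.1 i)) ?_ ?_ ?_ ?_ ?_ <;> simp
  rw [Fintype.sum_prod_type, Fintype.sum_prod_type] at key
  rw [key]
  simp [Finset.mul_sum]

lemma avg_const {ι V : Type} [Fintype ι] [DecidableEq ι] [Fintype V] [Nonempty V]
    (i : ι) (ψ : (ι → V) → ℝ) (K : ℝ)
    (hK : ∀ c, ∑ v : V, ψ (Function.update c i v) = (Fintype.card V : ℝ) * K) :
    ∑ c, ψ c = (Fintype.card V : ℝ) ^ (Fintype.card ι) * K := by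
  have h := avg_aux i ψ
  simp only [hK] at h
  have h0 : (Fintype.card V : ℝ) ≠ 0 := by
    have : Fintype.card V ≠ 0 := Fintype.card_ne_zero
    exact_mod_cast this
  apply mul_left_cancel₀ h0
  rw [← h]
  simp
  ring

lemma sg_mean {ι : Type} [Fintype ι] [DecidableEq ι] (m : ι) :
    ∑ b : ι → Bool, (sg (b m) : ℝ) = 0 := by
  rw [avg_const m _ 0]
  · simp
  · intro c; simp [sg]

lemma sg_cov {ι : Type} [Fintype ι] [DecidableEq ι] (m m' : ι) :
    ∑ b : ι → Bool, (sg (b m) : ℝ) * (sg (b m') : ℝ) =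
      if m = m' then 2 ^ Fintype.card ι else 0 := by
  split_ifs with hm
  · subst hm
    have : ∀ b : Bool, (sg b : ℝ) * sg b = 1 := by intro b; cases b <;> simp [sg]
    simp [this]
  · rw [avg_const m _ 0]
    · simp
    · intro c
      simp [sg, Function.update_of_ne (Ne.symm hm)]

lemma lin_mean {ι : Type} [Fintype ι] [DecidableEq ι] (u : ι → ℝ) :
    ∑ b : ι → Bool, (∑ m, u m * (sg (b m) : ℝ)) = 0 := by
  rw [Finset.sum_comm]
  simp [← Finset.mul_sum, sg_mean]

lemma lin_cov {ι : Type} [Fintype ι] [DecidableEq ι] (u v : ι → ℝ) :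
    ∑ b : ι → Bool, (∑ m, u m * (sg (b m) : ℝ)) * (∑ m, v m * (sg (b m) : ℝ)) =
      2 ^ Fintype.card ι * ∑ m, u m * v m := by
  simp_rw [Finset.sum_mul_sum]
  rw [Finset.sum_comm, Finset.mul_sum]
  refine Finset.sum_congr rfl fun m _ => ?_
  rw [Finset.sum_comm]
  have : ∀ m', ∑ b : ι → Bool, u m * (sg (b m) : ℝ) * (v m' * (sg (b m') : ℝ)) =
      u m * v m' * if m = m' then 2 ^ Fintype.card ι else 0 := by
    intro m'
    rw [← sg_cov, Finset.mul_sum]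
    exact Finset.sum_congr rfl fun b _ => by ring
  simp [this]
  ring

lemma SS_card {κ : Type} [Fintype κ] (b : κ → Bool) :
    SS b = 2 * ((Finset.univ.filter fun i => b i = true).card : ℤ) - Fintype.card κ := by
  have : ∀ i, sg (b i) = 2 * (if b i = true then 1 else 0) - 1 := by
    intro i; cases b i <;> simp [sg]
  simp only [SS, this, Finset.sum_sub_distrib, ← Finset.mul_sum]
  simp

lemma sum_SS {n : ℕ} (f : ℤ → ℤ) :
    ∑ b : Fin n → Bool, f (SS b) =
      ∑ p ∈ Finset.range (n + 1), (n.choose p : ℤ) * f (2 * p - n) := by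
  have h1 : ∑ b : Fin n → Bool, f (SS b) =
      ∑ s ∈ (Finset.univ : Finset (Fin n)).powerset, f (2 * (s.card : ℤ) - n) := by
    refine Finset.sum_bij' (fun b _ => Finset.univ.filter fun i => b i = true)
      (fun s _ => fun i => decide (i ∈ s)) ?_ ?_ ?_ ?_ ?_
    · simp
    · simp
    · intro a _; ext i; simp
    · intro a _; ext i; simp
    · intro a _; rw [SS_card]; simp
  rw [h1, Finset.sum_powerset_apply_card (fun k => f (2 * (k : ℤ) - n))]
  simp

lemma part1 (n k : ℕ) :
    ∑ p ∈ Finset.range (k + 1), (n.choose p : ℤ) * ((n : ℤ) - 2 * p) = n * ((n - 1).choose k) := by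
  rcases n with _ | n
  · induction k with
    | zero => simp
    | succ k ih => rw [Finset.sum_range_succ, ih]; simp
  · induction k with
    | zero => simp
    | succ k ih =>
      rw [Finset.sum_range_succ, ih]
      have a := Nat.add_one_mul_choose_eq n k
      have b : (n + 1).choose (k + 1) = n.choose k + n.choose (k + 1) := Nat.choose_succ_succ _ _
      zify at a b
      push_cast
      linear_combination (-2) * (-a) + (n + 1 : ℤ) * b

lemma part2 (n k : ℕ) :
    ∑ p ∈ Finset.range (k + 1), (n.choose p : ℤ) ^ 2 * ((n : ℤ) - 2 * p)
      = n * ((n - 1).choose k : ℤ) ^ 2 := by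
  rcases n with _ | n
  · induction k with
    | zero => simp
    | succ k ih => rw [Finset.sum_range_succ, ih]; simp
  · induction k with
    | zero => simp
    | succ k ih =>
      rw [Finset.sum_range_succ, ih]
      have a := Nat.add_one_mul_choose_eq n k
      have b : (n + 1).choose (k + 1) = n.choose k + n.choose (k + 1) := Nat.choose_succ_succ _ _
      zify at a b
      push_cast
      have e : ((n + 1).choose (k + 1) : ℤ) * ((n : ℤ) + 1 - 2 * (k + 1)) =
          (n + 1) * (n.choose (k + 1) - n.choose k) := by
        linear_combination (-2) * (-a) + (n + 1 : ℤ) * b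
      linear_combination ((n + 1).choose (k + 1) : ℤ) * e + (n + 1 : ℤ) * (n.choose (k + 1) - n.choose k) * b

lemma abs_split (n : ℕ) (w : ℕ → ℤ) (T : ℤ)
    (h0 : ∑ p ∈ Finset.range (n + 1), w p * ((n : ℤ) - 2 * p) = 0)
    (h1 : ∑ p ∈ Finset.range (n / 2 + 1), w p * ((n : ℤ) - 2 * p) = T) :
    ∑ p ∈ Finset.range (n + 1), w p * |2 * (p : ℤ) - n| = 2 * T := by
  have hle : n / 2 + 1 ≤ n + 1 := by omega
  rw [← Finset.sum_range_add_sum_Ico _ hle] at h0 ⊢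
  have e1 : ∑ p ∈ Finset.range (n / 2 + 1), w p * |2 * (p : ℤ) - n| = T := by
    rw [← h1]
    refine Finset.sum_congr rfl fun p hp => ?_
    rw [Finset.mem_range] at hp
    rw [abs_of_nonpos (by omega)]; ring
  have e2 : ∑ p ∈ Finset.Ico (n / 2 + 1) (n + 1), w p * |2 * (p : ℤ) - n| =
      - ∑ p ∈ Finset.Ico (n / 2 + 1) (n + 1), w p * ((n : ℤ) - 2 * p) := by
    rw [← Finset.sum_neg_distrib]
    refine Finset.sum_congr rfl fun p hp => ?_
    rw [Finset.mem_Ico] at hp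
    rw [abs_of_nonneg (by omega)]; ring
  rw [e1, e2]
  linarith

lemma abs_sum1 (n : ℕ) : ∑ b : Fin n → Bool, |SS b| = 2 * (n * ((n - 1).choose (n / 2) : ℤ)) := by
  rw [sum_SS (fun x => |x|)]
  refine abs_split n _ _ ?_ (part1 n _)
  rw [part1]
  rcases n with _ | n <;> simp

lemma abs_sum2 (n : ℕ) : ∑ b : Fin n → Bool, ∑ c : Fin n → Bool,
    (if SS b = SS c then |SS b| else 0) = 2 * (n * ((n - 1).choose (n / 2) : ℤ) ^ 2) := by
  have h := fun x : ℤ => sum_SS (n := n) (fun y => if x = y then |x| else 0)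
  simp_rw [h]
  rw [sum_SS (fun x => ∑ p ∈ Finset.range (n + 1), (n.choose p : ℤ) *
    if x = 2 * p - n then |x| else 0)]
  rw [← abs_split n (fun p => (n.choose p : ℤ) ^ 2) _ ?_ (part2 n _)]
  · refine Finset.sum_congr rfl fun p hp => ?_
    rw [Finset.sum_eq_single p]
    · simp; ring
    · intro q _ hq
      rw [if_neg (by omega)]; simp
    · intro h; exact absurd hp h
  · rw [part2]
    rcases n with _ | n <;> simp

lemma sum_cons {n : ℕ} (f : ℤ → ℤ) :
    ∑ b : Fin (n + 1) → Bool, f (SS b) =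
      ∑ b : Fin n → Bool, (f (SS b + 1) + f (SS b - 1)) := by
  rw [← (Fin.consEquiv (fun _ : Fin (n + 1) => Bool)).sum_comp, Fintype.sum_prod_type,
    Finset.sum_comm]
  refine Finset.sum_congr rfl fun b _ => ?_
  simp [SS, Fin.consEquiv, Fin.sum_univ_succ, sg]
  congr 1 <;> congr 1 <;> ring

def DD (n : ℕ) : ℤ := ∑ b : Fin n → Bool, ∑ c : Fin n → Bool, |SS b ^ 2 - SS c ^ 2|

lemma sum_neg {n : ℕ} (f : ℤ → ℤ) :
    ∑ b : Fin n → Bool, f (- SS b) = ∑ b : Fin n → Bool, f (SS b) := by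
  refine Finset.sum_bij' (fun b _ i => ! b i) (fun b _ i => ! b i) ?_ ?_ ?_ ?_ ?_
  · simp
  · simp
  · simp
  · simp
  · intro b _
    congr 1
    rw [SS, SS, ← Finset.sum_neg_distrib]
    refine Finset.sum_congr rfl fun i _ => ?_
    cases b i <;> simp [sg]

lemma abs_even_step (u : ℤ) (hu : Even u) : |u + 2| + |u - 2| = 2 * |u| + if u = 0 then 4 else 0 := by
  obtain ⟨k, rfl⟩ := hu
  split_ifs with h
  · have : k = 0 := by omega
    subst this; simp
  · rcases lt_or_gt_of_ne h with h | h
    · rw [abs_of_nonpos (by omega), abs_of_nonpos (by omega), abs_of_nonpos (by omega)]; ring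
    · rw [abs_of_nonneg (by omega), abs_of_nonneg (by omega), abs_of_nonneg (by omega)]; ring

lemma four_abs (x y : ℤ) (h : Even (x + y)) :
    (|(x + 1) ^ 2 - (y + 1) ^ 2| + |(x + 1) ^ 2 - (y - 1) ^ 2|) +
    (|(x - 1) ^ 2 - (y + 1) ^ 2| + |(x - 1) ^ 2 - (y - 1) ^ 2|) =
    4 * |x ^ 2 - y ^ 2| + 8 * (if x = y then |x| else 0) + 8 * (if x = - y then |x| else 0) := by
  have h' : Even (x - y) := by
    obtain ⟨k, hk⟩ := h; exact ⟨k - y, by omega⟩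
  have e1 := abs_even_step _ h
  have e2 := abs_even_step _ h'
  have a1 : |(x + 1) ^ 2 - (y + 1) ^ 2| = |x - y| * |x + y + 2| := by rw [← abs_mul]; ring_nf
  have a2 : |(x - 1) ^ 2 - (y - 1) ^ 2| = |x - y| * |x + y - 2| := by rw [← abs_mul]; ring_nf
  have a3 : |(x + 1) ^ 2 - (y - 1) ^ 2| = |x + y| * |x - y + 2| := by rw [← abs_mul]; ring_nf
  have a4 : |(x - 1) ^ 2 - (y + 1) ^ 2| = |x + y| * |x - y - 2| := by rw [← abs_mul]; ring_nf
  have a5 : |x ^ 2 - y ^ 2| = |x - y| * |x + y| := by rw [← abs_mul]; ring_nf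
  have b1 : |x - y| * (if x + y = 0 then 4 else 0) = 8 * (if x = - y then |x| else 0) := by
    by_cases hx : x = - y
    · rw [if_pos (by omega), if_pos hx]
      have : x - y = 2 * x := by omega
      rw [this, abs_mul]; simp; ring
    · rw [if_neg (by omega), if_neg hx]; simp
  have b2 : |x + y| * (if x - y = 0 then 4 else 0) = 8 * (if x = y then |x| else 0) := by
    by_cases hx : x = y
    · rw [if_pos (by omega), if_pos hx]
      have : x + y = 2 * x := by omega
      rw [this, abs_mul]; simp; ring
    · rw [if_neg (by omega), if_neg hx]; simp
  rw [a1, a2, a3, a4, a5, ← b1, ← b2]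
  linear_combination |x - y| * e1 + |x + y| * e2

lemma DD_succ (n : ℕ) : DD (n + 1) = 4 * DD n + 32 * (n * ((n - 1).choose (n / 2) : ℤ) ^ 2) := by
  unfold DD
  have h := fun x : ℤ => sum_cons (n := n) (fun y => |x ^ 2 - y ^ 2|)
  simp_rw [h]
  rw [sum_cons (fun x => ∑ b : Fin n → Bool, (|x ^ 2 - (SS b + 1) ^ 2| + |x ^ 2 - (SS b - 1) ^ 2|))]
  have hneg : ∑ b : Fin n → Bool, ∑ c : Fin n → Bool, (if SS b = - SS c then |SS b| else 0) =
      ∑ b : Fin n → Bool, ∑ c : Fin n → Bool, (if SS b = SS c then |SS b| else 0) :=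
    Finset.sum_congr rfl fun b _ => sum_neg (fun y => if SS b = y then |SS b| else 0)
  have e : ∀ b c : Fin n → Bool, Even (SS b + SS c) := by
    intro b c
    rw [SS_card, SS_card, Fintype.card_fin]
    rw [Int.even_iff]
    omega
  simp_rw [← Finset.sum_add_distrib]
  simp_rw [four_abs _ _ (e _ _)]
  simp_rw [Finset.sum_add_distrib, ← Finset.mul_sum]
  rw [hneg, abs_sum2]
  ring

lemma DD_even (m : ℕ) : DD (2 * m) = 8 * m ^ 2 * ((2 * m).choose m : ℤ) ^ 2 := by
  induction m with
  | zero => simp [DD, SS]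
  | succ m ih =>
    have e : 2 * (m + 1) = (2 * m + 1) + 1 := by ring
    rw [e, DD_succ, DD_succ, ih]
    have d1 : (2 * m + 1) / 2 = m := by omega
    have d2 : 2 * m / 2 = m := by omega
    rw [d1, d2, Nat.add_sub_cancel]
    have c1 := Nat.succ_mul_centralBinom_succ m
    simp only [Nat.centralBinom] at c1
    rw [e] at c1
    have c2 : 2 * (m * (2 * m - 1).choose m) = m * (2 * m).choose m := by
      rcases m with _ | m
      · simp
      · have : 2 * (m + 1) = (2 * m + 1) + 1 := by ring
        rw [this, Nat.add_sub_cancel]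
        have h1 : (2 * m + 1 + 1).choose (m + 1) = (2 * m + 1).choose m + (2 * m + 1).choose (m + 1) :=
          Nat.choose_succ_succ _ _
        have h2 := Nat.choose_symm_half m
        rw [h1, h2]; ring
    zify at c1 c2
    push_cast
    have c3 : 4 * ((m : ℤ) ^ 2 * ((2 * m - 1).choose m : ℤ) ^ 2) = m ^ 2 * ((2 * m).choose m : ℤ) ^ 2 := by
      linear_combination (2 * ((m : ℤ) * ((2 * m - 1).choose m : ℤ)) + m * ((2 * m).choose m : ℤ)) * c2
    have c4 : (m : ℤ) * (4 * (m * ((2 * m - 1).choose m : ℤ) ^ 2)) = m * (m * ((2 * m).choose m : ℤ) ^ 2) := by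
      linear_combination c3
    have c5 : 4 * (m * ((2 * m - 1).choose m : ℤ) ^ 2) = (m * ((2 * m).choose m : ℤ) ^ 2) := by
      rcases Nat.eq_zero_or_pos m with h | h
      · subst h; simp
      · exact mul_left_cancel₀ (by omega) c4
    rw [show (8 : ℤ) * (m + 1) ^ 2 * ((2 * m + 1 + 1).choose (m + 1) : ℤ) ^ 2 =
      8 * ((m + 1) * ((2 * m + 1 + 1).choose (m + 1) : ℤ)) ^ 2 by ring, c1]
    linear_combination 64 * c5

lemma sg_beq (a b : Bool) : sg (a == b) = sg a * sg b := by
  cases a <;> cases b <;> simp [sg]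

lemma exists_sign {ι : Type} (a : ι → ℝ) (ha : ∀ i, a i = 1 ∨ a i = -1) :
    ∃ α : ι → Bool, ∀ i, a i = (sg (α i) : ℝ) := by
  have : ∀ i, ∃ t : Bool, a i = (sg t : ℝ) := by
    intro i
    rcases ha i with h | h
    · exact ⟨true, by simp [sg, h]⟩
    · exact ⟨false, by simp [sg, h]⟩
  choose α hα using this
  exact ⟨α, hα⟩

lemma xor_sum {ι : Type} [Fintype ι] [DecidableEq ι] (α : ι → Bool) (f : (ι → Bool) → ℤ) :
    ∑ b : ι → Bool, f (fun i => α i == b i) = ∑ b : ι → Bool, f b := by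
  refine Finset.sum_bij' (fun b _ i => α i == b i) (fun b _ i => α i == b i) ?_ ?_ ?_ ?_ ?_
  · simp
  · simp
  · intro b _; funext i; cases ha : α i <;> cases hb : b i <;> simp [ha, hb]
  · intro b _; funext i; cases ha : α i <;> cases hb : b i <;> simp [ha, hb]
  · simp

lemma zabs {h : ℕ} (a : Fin h → ℝ) (ha : ∀ i, a i = 1 ∨ a i = -1) :
    ∑ b : Fin h → Bool, |∑ m, a m * (sg (b m) : ℝ)| = ((∑ b : Fin h → Bool, |SS b| : ℤ) : ℝ) := by
  obtain ⟨α, hα⟩ := exists_sign a ha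
  rw [← xor_sum α]
  push_cast
  refine Finset.sum_congr rfl fun b _ => ?_
  simp [SS, sg_beq, hα]

lemma SS_reindex {κ : Type} [Fintype κ] [DecidableEq κ] {n : ℕ} (hn : Fintype.card κ = n) (f : ℤ → ℤ) :
    ∑ b : κ → Bool, f (SS b) = ∑ b : Fin n → Bool, f (SS b) := by
  let e := Fintype.equivFinOfCardEq hn
  rw [← (Equiv.arrowCongr e (Equiv.refl Bool)).sum_comp]
  refine Finset.sum_congr rfl fun b _ => ?_
  congr 1
  unfold SS
  rw [← e.sum_comp]
  simp

lemma eps_sum {h n : ℕ} (hn : h = 2 * n) (e : Fin h → Bool) (he : SS e = 0) :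
    ∑ b : Fin h → Bool, |(∑ m, sg (b m)) * (∑ m, sg (e m) * sg (b m))| = DD n := by
  have c1 : Fintype.card {m // e m = true} = n := by
    rw [Fintype.card_subtype]
    rw [SS_card, Fintype.card_fin] at he
    omega
  have c2 : Fintype.card {m // ¬ e m = true} = n := by
    rw [Fintype.card_subtype_compl, c1, Fintype.card_fin]; omega
  rw [← (Equiv.piEquivPiSubtypeProd (fun m => e m = true) (fun _ => Bool)).symm.sum_comp,
    Fintype.sum_prod_type]
  have key : ∀ (x : {m // e m = true} → Bool) (y : {m // ¬ e m = true} → Bool),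
      |(∑ m, sg ((Equiv.piEquivPiSubtypeProd (fun m => e m = true) (fun _ => Bool)).symm (x, y) m)) *
       (∑ m, sg (e m) *
        sg ((Equiv.piEquivPiSubtypeProd (fun m => e m = true) (fun _ => Bool)).symm (x, y) m))|
      = |SS x ^ 2 - SS y ^ 2| := by
    intro x y
    set b := (Equiv.piEquivPiSubtypeProd (fun m => e m = true) (fun _ => Bool)).symm (x, y) with hb
    have hx : ∀ m : {m // e m = true}, b m = x m := by
      intro m; simp [hb, Equiv.piEquivPiSubtypeProd, m.2]
    have hy : ∀ m : {m // ¬ e m = true}, b m = y m := by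
      intro m
      have := m.2
      simp only [hb, Equiv.piEquivPiSubtypeProd, Equiv.coe_fn_symm_mk, dif_neg this]
    have s1 : ∑ m, sg (b m) = SS x + SS y := by
      rw [← Fintype.sum_subtype_add_sum_subtype (fun m => e m = true)]
      simp only [hx, hy, SS]
    have s2 : ∑ m, sg (e m) * sg (b m) = SS x - SS y := by
      rw [← Fintype.sum_subtype_add_sum_subtype (fun m => e m = true)]
      have t1 : ∀ m : {m // e m = true}, sg (e m) = 1 := fun m => by simp [sg, m.2]
      have t2 : ∀ m : {m // ¬ e m = true}, sg (e m) = -1 := fun m => by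
        have := m.2
        simp only [sg, if_neg this]
      simp only [hx, hy, t1, t2, SS, one_mul, neg_mul, Finset.sum_neg_distrib, sub_eq_add_neg]
    rw [s1, s2]
    ring_nf
  simp_rw [key]
  simp_rw [fun x : ℤ => SS_reindex c2 (fun y => |x ^ 2 - y ^ 2|)]
  exact SS_reindex c1 (fun x => ∑ c : Fin n → Bool, |x ^ 2 - SS c ^ 2|)

lemma zzabs {h n : ℕ} (hn : h = 2 * n) (a a' : Fin h → ℝ) (ha : ∀ i, a i = 1 ∨ a i = -1)
    (ha' : ∀ i, a' i = 1 ∨ a' i = -1) (h0 : ∑ m, a m * a' m = 0) :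
    ∑ b : Fin h → Bool, |(∑ m, a m * (sg (b m) : ℝ)) * (∑ m, a' m * (sg (b m) : ℝ))|
      = (DD n : ℝ) := by
  obtain ⟨α, hα⟩ := exists_sign a ha
  obtain ⟨β, hβ⟩ := exists_sign a' ha'
  have he : SS (fun m => α m == β m) = 0 := by
    have : ((SS (fun m => α m == β m) : ℤ) : ℝ) = 0 := by
      rw [← h0]; simp [SS, sg_beq, hα, hβ]
    exact_mod_cast this
  rw [← eps_sum hn _ he, ← xor_sum α]
  push_cast
  refine Finset.sum_congr rfl fun b _ => ?_
  simp only [sg_beq, hα, hβ]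
  push_cast
  congr 2
  refine Finset.sum_congr rfl fun m _ => ?_
  have : (sg (α m) : ℝ) * sg (α m) = 1 := by cases α m <;> simp [sg]
  linear_combination (-(sg (β m) : ℝ) * sg (b m)) * this

noncomputable def zz {h : ℕ} (A : Matrix (Fin h) (Fin h) ℝ) (u : Fin h → Bool) (k : Fin h) : ℝ :=
  ∑ m, A m k * (sg (u m) : ℝ)

noncomputable def FF {h : ℕ} (A : Matrix (Fin h) (Fin h) ℝ) (u v : Fin h → Bool) : ℝ :=
  (h : ℝ)⁻¹ * ∑ k, sgn (zz A u k) * zz A v k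

lemma sgn_mul_self (x : ℝ) : sgn x * x = |x| := by
  unfold sgn
  split_ifs with h
  · rw [abs_of_nonneg h]; ring
  · rw [abs_of_neg (not_le.mp h)]; ring

lemma sgn_sq (x : ℝ) : sgn x * sgn x = 1 := by
  unfold sgn
  split_ifs <;> norm_num

lemma Fmat_entry {h d : ℕ} (hh : 4 ≤ h) (A : Matrix (Fin h) (Fin h) ℝ)
    (hA2 : Aᵀ * A = (h : ℝ) • 1) (b : Fin h → Fin d → Bool) (i j : Fin d) :
    Fmat A (signMat b) i j = FF A (fun m => b m i) (fun m => b m j) := by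
  have h0 : (h : ℝ) ≠ 0 := by
    have : h ≠ 0 := by omega
    exact_mod_cast this
  have hinv : A⁻¹ = (h : ℝ)⁻¹ • Aᵀ := by
    apply Matrix.inv_eq_left_inv
    rw [Matrix.smul_mul, hA2, smul_smul, inv_mul_cancel₀ h0, one_smul]
  have hz : ∀ k j, (Aᵀ * signMat b) k j = zz A (fun m => b m j) k := by
    intro k j
    simp only [Matrix.mul_apply, zz, signMat, Matrix.transpose_apply, Matrix.of_apply, sg]
    refine Finset.sum_congr rfl fun m _ => ?_
    split_ifs <;> simp
  unfold Fmat FF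
  rw [hinv, Matrix.mul_assoc, Matrix.smul_mul, Matrix.mul_smul, Matrix.smul_apply, Matrix.mul_apply]
  simp only [Cmat, Matrix.of_apply, hz, smul_eq_mul]

lemma expec_of {h d : ℕ} (f : Matrix (Fin h) (Fin d) ℝ → ℝ) (i : Fin d) (K : ℝ)
    (hK : ∀ c : Fin d → Fin h → Bool,
      ∑ v : Fin h → Bool, f (signMat fun m j => Function.update c i v j m) = 2 ^ h * K) :
    expec h d f = K := by
  unfold expec
  rw [← (Equiv.piComm (fun (_ : Fin d) (_ : Fin h) => Bool)).sum_comp]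
  have hc : (Fintype.card (Fin h → Bool) : ℝ) = 2 ^ h := by simp
  have := avg_const i (fun c : Fin d → Fin h → Bool => f (signMat fun m j => c j m)) K
    (fun c => by rw [hc]; exact hK c)
  rw [hc, Fintype.card_fin, ← pow_mul] at this
  have h2 : (2 : ℝ) ^ (h * d) ≠ 0 := by positivity
  rw [div_eq_iff h2, mul_comm K, ← this]
  rfl

lemma E1 {h : ℕ} (h4 : 4 ∣ h) (hh : 4 ≤ h) (A : Matrix (Fin h) (Fin h) ℝ)
    (hA1 : ∀ i j, A i j = 1 ∨ A i j = -1) :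
    ∑ u : Fin h → Bool, FF A u u = h * (h.choose (h / 2) : ℝ) := by
  have h0 : (h : ℝ) ≠ 0 := by
    have : h ≠ 0 := by omega
    exact_mod_cast this
  unfold FF
  simp only [sgn_mul_self]
  rw [← Finset.mul_sum, Finset.sum_comm]
  have : ∀ k, ∑ u : Fin h → Bool, |zz A u k| = h * (h.choose (h / 2) : ℝ) := by
    intro k
    unfold zz
    rw [zabs (fun m => A m k) (fun m => hA1 m k), abs_sum1]
    obtain ⟨m, rfl⟩ : ∃ m, h = 2 * m + 1 + 1 := ⟨h / 2 - 1, by omega⟩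
    have d1 : (2 * m + 1 + 1) / 2 = m + 1 := by omega
    rw [d1, Nat.add_sub_cancel]
    have h1 : (2 * m + 1 + 1).choose (m + 1) = (2 * m + 1).choose m + (2 * m + 1).choose (m + 1) :=
          Nat.choose_succ_succ _ _
    have h2 := Nat.choose_symm_half m
    rw [h1, ← h2]
    push_cast; ring
  simp only [this]
  simp
  field_simp

lemma col_inner {h : ℕ} (A : Matrix (Fin h) (Fin h) ℝ)
    (hA2 : Aᵀ * A = (h : ℝ) • 1) (k l : Fin h) :
    ∑ m, A m k * A m l = if k = l then (h : ℝ) else 0 := by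
  have := congrFun (congrFun hA2 k) l
  simpa [Matrix.mul_apply, Matrix.one_apply] using this

lemma zz_cov {h : ℕ} (A : Matrix (Fin h) (Fin h) ℝ)
    (hA2 : Aᵀ * A = (h : ℝ) • 1) (k l : Fin h) :
    ∑ u : Fin h → Bool, zz A u k * zz A u l = if k = l then 2 ^ h * (h : ℝ) else 0 := by
  unfold zz
  rw [lin_cov (fun m => A m k) (fun m => A m l), col_inner A hA2]
  simp

lemma E2 {h : ℕ} (h4 : 4 ∣ h) (hh : 4 ≤ h) (A : Matrix (Fin h) (Fin h) ℝ)
    (hA1 : ∀ i j, A i j = 1 ∨ A i j = -1) (hA2 : Aᵀ * A = (h : ℝ) • 1) :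
    ∑ u : Fin h → Bool, FF A u u ^ 2 =
      2 ^ h + h * (h - 1) / 2 * ((h / 2).choose (h / 4) : ℝ) ^ 2 := by
  have h0 : (h : ℝ) ≠ 0 := by
    have : h ≠ 0 := by omega
    exact_mod_cast this
  have hD : (DD (h / 2) : ℝ) = h ^ 2 / 2 * ((h / 2).choose (h / 4) : ℝ) ^ 2 := by
    obtain ⟨m, rfl⟩ := h4
    have d1 : 4 * m / 2 = 2 * m := by omega
    have d2 : 4 * m / 4 = m := by omega
    rw [d1, d2, DD_even]
    push_cast; ring
  have hkl : ∀ k l, ∑ u : Fin h → Bool, |zz A u k| * |zz A u l| =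
      (DD (h / 2) : ℝ) + if k = l then 2 ^ h * (h : ℝ) - DD (h / 2) else 0 := by
    intro k l
    simp only [← abs_mul]
    split_ifs with hk
    · subst hk
      simp only [abs_mul_self]
      rw [zz_cov A hA2]; simp
    · unfold zz
      rw [zzabs (n := h / 2) (by omega) (fun m => A m k) (fun m => A m l) (fun m => hA1 m k)
        (fun m => hA1 m l) (by rw [col_inner A hA2, if_neg hk])]
      simp
  unfold FF
  simp only [sgn_mul_self, mul_pow]
  rw [← Finset.mul_sum]
  simp_rw [sq (∑ k, |zz A _ k|), Finset.sum_mul_sum]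
  rw [Finset.sum_comm]
  have : ∀ k, ∑ u : Fin h → Bool, ∑ l, |zz A u k| * |zz A u l| =
     h * (DD (h / 2) : ℝ) + (2 ^ h * (h : ℝ) - DD (h / 2)) := by
    intro k
    rw [Finset.sum_comm]
    simp only [hkl, Finset.sum_add_distrib]
    simp
  simp only [this, hD]
  simp only [Finset.sum_const, Finset.card_univ, Fintype.card_fin, nsmul_eq_mul]
  field_simp
  ring

lemma E3 {h : ℕ} (A : Matrix (Fin h) (Fin h) ℝ) (u : Fin h → Bool) :
    ∑ v : Fin h → Bool, FF A u v = 0 := by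
  unfold FF
  rw [← Finset.mul_sum, Finset.sum_comm]
  have : ∀ k, ∑ v : Fin h → Bool, sgn (zz A u k) * zz A v k = 0 := by
    intro k
    rw [← Finset.mul_sum]
    unfold zz
    rw [lin_mean (fun m => A m k)]; simp
  simp [this]

lemma E4 {h : ℕ} (hh : 4 ≤ h) (A : Matrix (Fin h) (Fin h) ℝ)
    (hA2 : Aᵀ * A = (h : ℝ) • 1) (u : Fin h → Bool) :
    ∑ v : Fin h → Bool, FF A u v ^ 2 = 2 ^ h := by
  have h0 : (h : ℝ) ≠ 0 := by
    have : h ≠ 0 := by omega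
    exact_mod_cast this
  unfold FF
  simp only [mul_pow]
  rw [← Finset.mul_sum]
  simp_rw [sq (∑ k, sgn (zz A u k) * zz A _ k), Finset.sum_mul_sum]
  rw [Finset.sum_comm]
  have : ∀ k, ∑ v : Fin h → Bool, ∑ l, sgn (zz A u k) * zz A v k * (sgn (zz A u l) * zz A v l) =
      2 ^ h * (h : ℝ) := by
    intro k
    rw [Finset.sum_comm]
    have : ∀ l, ∑ v : Fin h → Bool, sgn (zz A u k) * zz A v k * (sgn (zz A u l) * zz A v l) =
       sgn (zz A u k) * sgn (zz A u l) * if k = l then 2 ^ h * (h : ℝ) else 0 := by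
      intro l
      rw [← zz_cov A hA2, Finset.mul_sum]
      exact Finset.sum_congr rfl fun v _ => by ring
    simp [this, sgn_sq]
  simp only [this]
  simp only [Finset.sum_const, Finset.card_univ, Fintype.card_fin, nsmul_eq_mul]
  field_simp

/-- Let `A` be a Hadamard matrix of order `h ≥ 4` (so `4 ∣ h`), `d ≥ 1`, and
for each `B ∈ {−1,1}^{h×d}` set `C = sgn(AᵀB)ᵀ`, `F = C A⁻¹ B`, `G = F + I`.
Then, averaging over all `2^{hd}` equally likely choices of `B`:
`E[g_{ii}] = 1 + 2^{−h} h binom(h, h/2)`; `E[g_{ij}] = 0` for `i ≠ j`;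
`Var[g_{ii}] = 1 + h(h−1) 2^{−(h+1)} binom(h/2, h/4)² − h² 2^{−2h} binom(h, h/2)²`;
and `Var[g_{ij}] = 1` for `i ≠ j`.  (Here `Var[X] = E[X²] − E[X]²`.) -/
theorem mean_var_G_entries (h d : ℕ) (h4 : 4 ∣ h) (hh : 4 ≤ h) (hd : 1 ≤ d)
    (A : Matrix (Fin h) (Fin h) ℝ)
    (hA1 : ∀ i j, A i j = 1 ∨ A i j = -1)
    (hA2 : Aᵀ * A = (h : ℝ) • 1) :
    (∀ i : Fin d,
      expec h d (fun B => (Fmat A B + 1) i i) =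
        1 + (2 : ℝ) ^ (-(h : ℤ)) * h * (h.choose (h / 2) : ℝ)) ∧
    (∀ i j : Fin d, i ≠ j →
      expec h d (fun B => (Fmat A B + 1) i j) = 0) ∧
    (∀ i : Fin d,
      expec h d (fun B => ((Fmat A B + 1) i i) ^ 2) -
        (expec h d (fun B => (Fmat A B + 1) i i)) ^ 2 =
      1 + (h : ℝ) * ((h : ℝ) - 1) * (2 : ℝ) ^ (-((h : ℤ) + 1)) *
            ((h / 2).choose (h / 4) : ℝ) ^ 2 -
        (h : ℝ) ^ 2 * (2 : ℝ) ^ (-(2 * (h : ℤ))) * (h.choose (h / 2) : ℝ) ^ 2) ∧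
    (∀ i j : Fin d, i ≠ j →
      expec h d (fun B => ((Fmat A B + 1) i j) ^ 2) -
        (expec h d (fun B => (Fmat A B + 1) i j)) ^ 2 = 1) := by
  have e1 : ∀ i : Fin d, expec h d (fun B => (Fmat A B + 1) i i) =
        1 + (2 : ℝ) ^ (-(h : ℤ)) * h * (h.choose (h / 2) : ℝ) := by
    intro i
    apply expec_of _ i
    intro c
    simp only [Matrix.add_apply, Fmat_entry hh A hA2, Matrix.one_apply_eq, Function.update_self]
    rw [Finset.sum_add_distrib, E1 h4 hh A hA1]
    simp
    field_simp
    ring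
  have e2 : ∀ i j : Fin d, i ≠ j → expec h d (fun B => (Fmat A B + 1) i j) = 0 := by
    intro i j hij
    apply expec_of _ j
    intro c
    simp only [Matrix.add_apply, Fmat_entry hh A hA2, Matrix.one_apply_ne hij,
      Function.update_self, Function.update_of_ne hij, add_zero, mul_zero]
    exact E3 A (c i)
  refine ⟨e1, e2, ?_, ?_⟩
  · intro i
    have e3 : expec h d (fun B => ((Fmat A B + 1) i i) ^ 2) =
        1 + 2 * ((2 : ℝ) ^ (-(h : ℤ)) * h * (h.choose (h / 2) : ℝ)) +
        (1 + h * (h - 1) / 2 * ((h / 2).choose (h / 4) : ℝ) ^ 2 * (2 : ℝ) ^ (-(h : ℤ))) := by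
      apply expec_of _ i
      intro c
      simp only [Matrix.add_apply, Fmat_entry hh A hA2, Matrix.one_apply_eq, Function.update_self]
      have : ∀ v : Fin h → Bool, (FF A v v + 1) ^ 2 = FF A v v ^ 2 + 2 * FF A v v + 1 := by
        intro v; ring
      simp only [this, Finset.sum_add_distrib, ← Finset.mul_sum]
      rw [E1 h4 hh A hA1, E2 h4 hh A hA1 hA2]
      simp
      field_simp
      ring
    rw [e1, e3]
    have z1 : (2 : ℝ) ^ (-((h : ℤ) + 1)) = (2 : ℝ) ^ (-(h : ℤ)) / 2 := by
      rw [neg_add, zpow_add₀ (by norm_num)]; norm_num; ring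
    have z2 : (2 : ℝ) ^ (-(2 * (h : ℤ))) = ((2 : ℝ) ^ (-(h : ℤ))) ^ 2 := by
      rw [← zpow_natCast, ← _root_.zpow_mul]; congr 1; push_cast; ring
    rw [z1, z2]
    ring
  · intro i j hij
    rw [e2 i j hij]
    have : expec h d (fun B => ((Fmat A B + 1) i j) ^ 2) = 1 := by
      apply expec_of _ j
      intro c
      simp only [Matrix.add_apply, Fmat_entry hh A hA2, Matrix.one_apply_ne hij,
        Function.update_self, Function.update_of_ne hij, add_zero, mul_one]
      exact E4 hh A hA2 (c i)
    rw [this]; ring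
end

section
/- Let n = h + d where h ≥ 4 is a Hadamard order and 0 ≤ d ≤ 3. Then D(n)/n^{n/2} ≥ (2/(π·e))^{d/2}, and the inequality is strict if d > 0. -/
open Matrix

/-- A positive integer `m` is a Hadamard order if there is an `m × m` matrix
with entries in `{−1, 1}` satisfying `Aᵀ A = m I`. -/
def IsHadamardOrder (m : ℕ) : Prop :=
  ∃ A : Matrix (Fin m) (Fin m) ℝ,
    (∀ i j, A i j = 1 ∨ A i j = -1) ∧ Aᵀ * A = (m : ℝ) • 1

/-- `D(n)`: the maximal determinant of an `n × n` matrix with entries in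
`{−1, 1}`. -/
noncomputable def maxDet (n : ℕ) : ℝ :=
  sSup {x : ℝ | ∃ M : Matrix (Fin n) (Fin n) ℝ,
    (∀ i j, M i j = 1 ∨ M i j = -1) ∧ M.det = x}


/-! ### Finite averages -/

noncomputable def Ex {h : ℕ} (g : Finset (Fin h) → ℝ) : ℝ := (∑ S, g S) / 2 ^ h

lemma Ex_add {h : ℕ} (f g : Finset (Fin h) → ℝ) :
    Ex (fun S => f S + g S) = Ex f + Ex g := by
  simp only [Ex, Finset.sum_add_distrib]; ring

lemma Ex_sub {h : ℕ} (f g : Finset (Fin h) → ℝ) :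
    Ex (fun S => f S - g S) = Ex f - Ex g := by
  simp only [Ex, Finset.sum_sub_distrib]; ring

lemma Ex_mul_left {h : ℕ} (c : ℝ) (g : Finset (Fin h) → ℝ) :
    Ex (fun S => c * g S) = c * Ex g := by
  simp only [Ex, ← Finset.mul_sum]; ring

lemma Ex_mul_right {h : ℕ} (c : ℝ) (g : Finset (Fin h) → ℝ) :
    Ex (fun S => g S * c) = Ex g * c := by
  simp only [Ex, ← Finset.sum_mul]; ring

lemma Ex_const {h : ℕ} (c : ℝ) : Ex (fun _ : Finset (Fin h) => c) = c := by
  simp [Ex]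

lemma Ex_comm {h : ℕ} (g : Finset (Fin h) → Finset (Fin h) → ℝ) :
    Ex (fun a => Ex (fun b => g a b)) = Ex (fun b => Ex (fun a => g a b)) := by
  simp only [Ex, ← Finset.sum_div]
  rw [Finset.sum_comm]

lemma Ex_mono {h : ℕ} {f g : Finset (Fin h) → ℝ} (H : ∀ S, f S ≤ g S) : Ex f ≤ Ex g := by
  unfold Ex
  gcongr with S
  exact H S

lemma Ex_lt {h : ℕ} {g : Finset (Fin h) → ℝ} {c : ℝ} (H : ∀ S, g S < c) : Ex g < c := by
  have h1 : ∑ S, g S < ∑ _S : Finset (Fin h), c :=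
    Finset.sum_lt_sum_of_nonempty Finset.univ_nonempty (fun S _ => H S)
  unfold Ex
  rw [div_lt_iff₀ (by positivity)]
  simpa [mul_comm] using h1

lemma avg1 {h : ℕ} (K : Finset (Fin h) → Finset (Fin h) → ℝ) (μ : ℝ)
    (hp : Ex (fun b => K b b) = μ) : ∃ a, μ + 1 ≤ K a a + 1 := by
  by_contra! H
  have := Ex_lt H
  rw [Ex_add, hp, Ex_const] at this
  exact lt_irrefl _ this

lemma avg2 {h : ℕ} (K : Finset (Fin h) → Finset (Fin h) → ℝ) (μ : ℝ)
    (hp : Ex (fun b => K b b) = μ) (hq : ∀ a, Ex (fun b => K a b ^ 2) = 1) :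
    ∃ a b, (μ + 1) ^ 2 - 1 ≤ (K a a + 1) * (K b b + 1) - K a b * K b a := by
  by_contra! H
  have h1 := Ex_lt (fun a => Ex_lt (H a))
  have h2 : Ex (fun a => Ex (fun b => (K a a + 1) * (K b b + 1)
      - ((1/2) * K a b ^ 2 + (1/2) * K b a ^ 2))) ≤
      Ex (fun a => Ex (fun b => (K a a + 1) * (K b b + 1) - K a b * K b a)) := by
    refine Ex_mono fun a => Ex_mono fun b => ?_
    nlinarith [sq_nonneg (K a b - K b a)]
  have h3 : Ex (fun a => Ex (fun b => K b a ^ 2)) = 1 := by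
    rw [Ex_comm]; simp only [hq, Ex_const]
  replace h2 := lt_of_le_of_lt h2 h1
  simp only [Ex_sub, Ex_add, Ex_mul_left, Ex_mul_right, Ex_const, hp, hq, h3] at h2
  linarith

lemma avg3 {h : ℕ} (K : Finset (Fin h) → Finset (Fin h) → ℝ) (μ : ℝ)
    (h0 : ∀ b, 0 ≤ K b b)
    (hp : Ex (fun b => K b b) = μ) (hq : ∀ a, Ex (fun b => K a b ^ 2) = 1) :
    ∃ a b c, μ ^ 3 + 3 * μ ^ 2 - 4 ≤ (K a a + 1) * (K b b + 1) * (K c c + 1)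
      - (K a a + 1) * (K b c * K c b) - (K b b + 1) * (K a c * K c a)
      - (K c c + 1) * (K a b * K b a) + K a b * K b c * K c a + K a c * K c b * K b a := by
  by_contra! H
  have h1 := Ex_lt (fun a => Ex_lt (fun b => Ex_lt (H a b)))
  have h2 : Ex (fun a => Ex (fun b => Ex (fun c =>
      (K a a + 1) * (K b b + 1) * (K c c + 1)
      - (1/2) * ((K a a + 1) * K b c ^ 2) - (1/2) * ((K a a + 1) * K c b ^ 2)
      - (1/2) * ((K b b + 1) * K a c ^ 2) - (1/2) * ((K b b + 1) * K c a ^ 2)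
      - (1/2) * ((K c c + 1) * K a b ^ 2) - (1/2) * ((K c c + 1) * K b a ^ 2)
      - (1/2) * (K a b ^ 2 * K b c ^ 2) - (1/2) * K c a ^ 2
      - (1/2) * (K a c ^ 2 * K c b ^ 2) - (1/2) * K b a ^ 2))) ≤
      Ex (fun a => Ex (fun b => Ex (fun c => (K a a + 1) * (K b b + 1) * (K c c + 1)
      - (K a a + 1) * (K b c * K c b) - (K b b + 1) * (K a c * K c a)
      - (K c c + 1) * (K a b * K b a) + K a b * K b c * K c a + K a c * K c b * K b a))) := by
    refine Ex_mono fun a => Ex_mono fun b => Ex_mono fun c => ?_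
    have e1 : 0 ≤ (K a a + 1) * (K b c - K c b) ^ 2 := by have := h0 a; positivity
    have e2 : 0 ≤ (K b b + 1) * (K a c - K c a) ^ 2 := by have := h0 b; positivity
    have e3 : 0 ≤ (K c c + 1) * (K a b - K b a) ^ 2 := by have := h0 c; positivity
    have e4 := sq_nonneg (K a b * K b c + K c a)
    have e5 := sq_nonneg (K a c * K c b + K b a)
    nlinarith
  have s : Ex (fun a => Ex (fun b => K b a ^ 2)) = 1 := by
    rw [Ex_comm]; simp only [hq, Ex_const]
  have s2 : Ex (fun a => Ex (fun b => Ex (fun c => (K b b + 1) * K c a ^ 2))) = μ + 1 := by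
    rw [Ex_comm]
    simp only [Ex_mul_left, s, mul_one, Ex_add, hp, Ex_const]
  have s3 : Ex (fun a => Ex (fun b => Ex (fun c => K a c ^ 2 * K c b ^ 2))) = 1 := by
    have : ∀ a, Ex (fun b => Ex (fun c => K a c ^ 2 * K c b ^ 2)) = 1 := by
      intro a
      rw [Ex_comm]
      simp only [Ex_mul_left, hq, mul_one]
    simp only [this, Ex_const]
  have s4 : Ex (fun a => Ex (fun b => Ex (fun c => (K a a + 1) * K c b ^ 2))) = μ + 1 := by
    simp only [Ex_mul_left, s, mul_one, Ex_add, hp, Ex_const]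
  have s5 : Ex (fun a => Ex (fun b => Ex (fun c => (K b b + 1) * K a c ^ 2))) = μ + 1 := by
    simp only [Ex_mul_left, hq, mul_one, Ex_add, hp, Ex_const]
  have s6 : Ex (fun a => Ex (fun b => Ex (fun c => (K c c + 1) * K b a ^ 2))) = μ + 1 := by
    simp only [Ex_mul_right, Ex_mul_left, s, mul_one, Ex_add, hp, Ex_const]
  have s7 : Ex (fun a => Ex (fun b => Ex (fun c => (K c c + 1) * K a b ^ 2))) = μ + 1 := by
    simp only [Ex_mul_right, Ex_mul_left, hq, mul_one, Ex_add, hp, Ex_const]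
  have s8 : Ex (fun a => Ex (fun b => Ex (fun c => (K a a + 1) * K b c ^ 2))) = μ + 1 := by
    simp only [Ex_mul_left, hq, mul_one, Ex_add, hp, Ex_const]
  have s9 : Ex (fun a => Ex (fun b => Ex (fun c => K a b ^ 2 * K b c ^ 2))) = 1 := by
    simp only [Ex_mul_left, hq, mul_one, Ex_const]
  have s10 : Ex (fun a => Ex (fun b => Ex (fun c => (K a a + 1) * (K b b + 1) * (K c c + 1))))
      = (μ + 1) ^ 3 := by
    simp only [Ex_mul_left, Ex_mul_right, Ex_add, hp, Ex_const]; ring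
  have s11 : Ex (fun a => Ex (fun _ : Finset (Fin h) => Ex (fun c => (1/2) * K c a ^ 2))) = 1/2 := by
    simp only [Ex_const, Ex_mul_left, s]; norm_num
  have s12 : Ex (fun a => Ex (fun b => Ex (fun _ : Finset (Fin h) => (1/2) * K b a ^ 2))) = 1/2 := by
    simp only [Ex_const, Ex_mul_left, s]; norm_num
  have t : ∀ g : Finset (Fin h) → Finset (Fin h) → Finset (Fin h) → ℝ,
    Ex (fun a => Ex (fun b => Ex (fun c => (1/2) * g a b c))) =
      (1/2) * Ex (fun a => Ex (fun b => Ex (fun c => g a b c))) := by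
    intro g; simp only [Ex_mul_left]
  replace h2 := lt_of_le_of_lt h2 h1
  simp only [Ex_sub] at h2
  rw [s11, s12, s10, t, t, t, t, t, t, t, t, s2, s3, s4, s5, s6, s7, s8, s9] at h2
  nlinarith

/-! ### Rademacher vectors -/

noncomputable def eps {h : ℕ} (S : Finset (Fin h)) (i : Fin h) : ℝ := if i ∈ S then 1 else -1

lemma eps_sign {h : ℕ} (S : Finset (Fin h)) (i : Fin h) : eps S i = 1 ∨ eps S i = -1 := by
  unfold eps; split_ifs <;> simp

lemma eps_flip {h : ℕ} (S T : Finset (Fin h)) (i : Fin h) :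
    eps (symmDiff T S) i = - eps T i * eps S i := by
  unfold eps
  by_cases h1 : i ∈ S <;> by_cases h2 : i ∈ T <;> simp [Finset.mem_symmDiff, h1, h2]

def flipE {h : ℕ} (T : Finset (Fin h)) : Finset (Fin h) ≃ Finset (Fin h) :=
  ⟨fun S => symmDiff T S, fun S => symmDiff T S, fun S => by simp, fun S => by simp⟩

lemma sum_eps_mul {h : ℕ} (i j : Fin h) :
    ∑ S : Finset (Fin h), eps S i * eps S j = if i = j then 2 ^ h else 0 := by
  split_ifs with hij
  · subst hij
    have : ∀ S : Finset (Fin h), eps S i * eps S i = 1 := by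
      intro S; rcases eps_sign S i with h | h <;> simp [h]
    simp [this]
  · have h1 := Equiv.sum_comp (flipE {i}) (fun S : Finset (Fin h) => eps S i * eps S j)
    have h2 : ∀ S : Finset (Fin h), eps (flipE {i} S) i * eps (flipE {i} S) j =
        - (eps S i * eps S j) := by
      intro S
      simp only [flipE, Equiv.coe_fn_mk, eps_flip]
      have : j ≠ i := fun h => hij h.symm
      simp only [eps, Finset.mem_singleton, this, if_true, if_false]; ring
    simp only [h2, Finset.sum_neg_distrib] at h1
    linarith

lemma Ex_sq {h : ℕ} (u : Fin h → ℝ) :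
    Ex (fun S => (∑ i, u i * eps S i) ^ 2) = ∑ i, u i ^ 2 := by
  unfold Ex
  rw [div_eq_iff (by positivity)]
  have : ∀ S : Finset (Fin h), (∑ i, u i * eps S i) ^ 2 =
      ∑ i, ∑ j, u i * u j * (eps S i * eps S j) := by
    intro S
    rw [sq, Finset.sum_mul_sum]
    refine Finset.sum_congr rfl fun i _ => Finset.sum_congr rfl fun j _ => by ring
  simp only [this]
  rw [Finset.sum_comm, Finset.sum_mul]
  refine Finset.sum_congr rfl fun i _ => ?_
  rw [Finset.sum_comm]
  simp only [← Finset.mul_sum, sum_eps_mul]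
  simp [sq]

lemma partial_sum (n j : ℕ) :
    ∑ k ∈ Finset.range j, (n.choose k : ℝ) * (n - 2 * k) = j * n.choose j := by
  induction j with
  | zero => simp
  | succ j ih =>
    rw [Finset.sum_range_succ, ih]
    rcases le_or_gt j n with hj | hj
    · have := Nat.choose_succ_right_eq n j
      have h2 : (n.choose (j+1) : ℝ) * (j + 1) = n.choose j * (n - j) := by
        rw [← Nat.cast_sub hj]; exact_mod_cast this
      push_cast
      linarith
    · simp [Nat.choose_eq_zero_of_lt hj, Nat.choose_eq_zero_of_lt (Nat.lt_succ_of_lt hj)]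

lemma abs_sum (m : ℕ) :
    ∑ k ∈ Finset.range (2 * m + 1), ((2 * m).choose k : ℝ) * |2 * (k : ℝ) - 2 * m| =
      2 * m * Nat.centralBinom m := by
  have e1 := partial_sum (2 * m) m
  have e2 := partial_sum (2 * m) (2 * m + 1)
  rw [Nat.choose_eq_zero_of_lt (by omega : 2 * m < 2 * m + 1)] at e2
  have hle : m ≤ 2 * m + 1 := by omega
  rw [← Finset.sum_range_add_sum_Ico _ hle] at e2 ⊢
  rw [e1] at e2
  have f1 : ∑ k ∈ Finset.range m, ((2 * m).choose k : ℝ) * |2 * (k : ℝ) - 2 * m| =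
      ∑ k ∈ Finset.range m, ((2 * m).choose k : ℝ) * ((2 * m : ℕ) - 2 * k) := by
    refine Finset.sum_congr rfl fun k hk => ?_
    have : (k : ℝ) ≤ m := by exact_mod_cast (Finset.mem_range.1 hk).le
    rw [abs_of_nonpos (by linarith)]; push_cast; ring
  have f2 : ∑ k ∈ Finset.Ico m (2 * m + 1), ((2 * m).choose k : ℝ) * |2 * (k : ℝ) - 2 * m| =
      - ∑ k ∈ Finset.Ico m (2 * m + 1), ((2 * m).choose k : ℝ) * ((2 * m : ℕ) - 2 * k) := by
    rw [← Finset.sum_neg_distrib]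
    refine Finset.sum_congr rfl fun k hk => ?_
    have : (m : ℝ) ≤ k := by exact_mod_cast (Finset.mem_Ico.1 hk).1
    rw [abs_of_nonneg (by linarith)]; push_cast; ring
  rw [f1, f2, e1, Nat.centralBinom]
  push_cast at e2 ⊢
  linarith

lemma sum_abs_eps (m : ℕ) :
    ∑ S : Finset (Fin (2 * m)), |∑ i, eps S i| = 2 * m * Nat.centralBinom m := by
  rw [← abs_sum]
  have h1 : ∀ S : Finset (Fin (2 * m)), |∑ i, eps S i| = |2 * (S.card : ℝ) - 2 * m| := by
    intro S
    congr 1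
    have : ∀ i, eps S i = 2 * (if i ∈ S then 1 else 0) - 1 := by
      intro i; unfold eps; split_ifs <;> norm_num
    simp only [this, Finset.sum_sub_distrib, ← Finset.mul_sum]
    simp
  simp only [h1]
  have := Finset.sum_powerset_apply_card (fun k : ℕ => |2 * (k : ℝ) - 2 * m|)
    (x := (Finset.univ : Finset (Fin (2 * m))))
  simp only [Finset.powerset_univ, Finset.card_univ, Fintype.card_fin, nsmul_eq_mul] at this
  exact this

lemma sum_abs_signed {m : ℕ} (a : Fin (2 * m) → ℝ) (ha : ∀ i, a i = 1 ∨ a i = -1) :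
    ∑ S : Finset (Fin (2 * m)), |∑ i, a i * eps S i| = 2 * m * Nat.centralBinom m := by
  classical
  rw [← sum_abs_eps, ← Equiv.sum_comp (flipE (Finset.univ.filter fun i => a i = -1))]
  refine Finset.sum_congr rfl fun S _ => ?_
  congr 1
  refine Finset.sum_congr rfl fun i _ => ?_
  simp only [flipE, Equiv.coe_fn_mk, eps_flip]
  rcases ha i with h | h <;> simp only [eps, h, Finset.mem_filter, Finset.mem_univ, true_and] <;>
    norm_num

noncomputable def mu (m : ℕ) : ℝ := 2 * m * Nat.centralBinom m / 2 ^ (2 * m)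

lemma mu_nonneg (m : ℕ) : 0 ≤ mu m := by unfold mu; positivity

lemma mu_sq (m : ℕ) : 2 * (2 * m : ℝ) ^ 2 ≤ mu m ^ 2 * (Real.pi * (2 * m + 1)) := by
  have h1 := Real.Wallis.W_le m
  rw [Real.Wallis.W_eq_factorial_ratio] at h1
  have hc : (Nat.centralBinom m : ℝ) * ((m.factorial : ℝ) ^ 2) = (2 * m).factorial := by
    have := Nat.choose_mul_factorial_mul_factorial (by omega : m ≤ 2 * m)
    rw [show 2 * m - m = m by omega] at this
    rw [Nat.centralBinom, ← this]; push_cast; ring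
  rw [← hc] at h1
  have hb : (0:ℝ) < Nat.centralBinom m := by exact_mod_cast Nat.centralBinom_pos m
  have hf : (0:ℝ) < m.factorial := by exact_mod_cast Nat.factorial_pos m
  rw [div_le_iff₀ (by positivity)] at h1
  have h2 : (2:ℝ) ^ (4 * m) * 2 ≤ Real.pi * ((Nat.centralBinom m : ℝ) ^ 2 * (2 * m + 1)) := by
    have : 0 < (m.factorial : ℝ) ^ 4 := by positivity
    refine le_of_mul_le_mul_right ?_ this
    nlinarith
  unfold mu
  rw [div_pow, div_mul_eq_mul_div, le_div_iff₀ (by positivity)]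
  have e : ((2:ℝ) ^ (2 * m)) ^ 2 = 2 ^ (4 * m) := by rw [← pow_mul]; ring_nf
  rw [e]
  have : 0 ≤ (2 * (m:ℝ)) ^ 2 := by positivity
  nlinarith [mul_le_mul_of_nonneg_left h2 this]

/-! ### Determinants -/

lemma maxDet_bdd (n : ℕ) : BddAbove {x : ℝ | ∃ M : Matrix (Fin n) (Fin n) ℝ,
    (∀ i j, M i j = 1 ∨ M i j = -1) ∧ M.det = x} := by
  refine ⟨(n.factorial : ℝ), ?_⟩
  rintro x ⟨M, hM, rfl⟩
  have := Matrix.det_le (A := M) (abv := AbsoluteValue.abs) (x := (1:ℝ)) (by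
    intro i j
    rcases hM i j with h | h <;> simp [h])
  simp at this
  exact (le_abs_self _).trans this

lemma le_maxDet {n : ℕ} (hn : 0 < n) (M : Matrix (Fin n) (Fin n) ℝ)
    (hM : ∀ i j, M i j = 1 ∨ M i j = -1) : |M.det| ≤ maxDet n := by
  rcases abs_cases M.det with ⟨h, _⟩ | ⟨h, _⟩
  · rw [h]
    exact le_csSup (maxDet_bdd n) ⟨M, hM, rfl⟩
  · rw [h]
    refine le_csSup (maxDet_bdd n) ⟨M.updateRow ⟨0, hn⟩ ((-1 : ℝ) • M ⟨0, hn⟩), ?_, ?_⟩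
    · intro i j
      rw [Matrix.updateRow_apply]
      split_ifs with hi
      · rcases hM ⟨0, hn⟩ j with h | h <;> simp [h]
      · exact hM i j
    · rw [Matrix.det_updateRow_smul, Matrix.updateRow_eq_self]; ring

lemma four_dvd {h : ℕ} (hh : 4 ≤ h) (hH : IsHadamardOrder h) : 4 ∣ h := by
  obtain ⟨A, hs, hA⟩ := hH
  have key : ∀ p q : Fin h, ∑ i, A i p * A i q = if p = q then (h:ℝ) else 0 := by
    intro p q
    have := congrFun (congrFun hA p) q
    simpa [Matrix.mul_apply, Matrix.one_apply] using this
  let p : Fin h := ⟨0, by omega⟩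
  let q : Fin h := ⟨1, by omega⟩
  let r : Fin h := ⟨2, by omega⟩
  have hpq : p ≠ q := by simp [p, q]
  have hpr : p ≠ r := by simp [p, r]
  have hqr : q ≠ r := by simp [q, r]
  have h4 : ∀ i, ∃ k : ℕ, (A i p + A i q) * (A i p + A i r) = 4 * k := by
    intro i
    rcases hs i p with h1 | h1 <;> rcases hs i q with h2 | h2 <;> rcases hs i r with h3 | h3 <;>
      rw [h1, h2, h3] <;> first | (refine ⟨0, ?_⟩; norm_num; done) | (refine ⟨1, ?_⟩; norm_num; done)
  choose k hk using h4
  have e : ∑ i, (A i p + A i q) * (A i p + A i r) = h := by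
    have : ∀ i, (A i p + A i q) * (A i p + A i r) =
      A i p * A i p + A i p * A i r + A i p * A i q + A i q * A i r := by intro i; ring
    simp only [this, Finset.sum_add_distrib, key, hpq, hpr, hqr, if_true, if_false]; ring
  simp only [hk, ← Finset.mul_sum] at e
  exact ⟨∑ i, k i, by exact_mod_cast e.symm⟩

noncomputable def cs {h : ℕ} (A : Matrix (Fin h) (Fin h) ℝ) (S : Finset (Fin h)) (j : Fin h) : ℝ :=
  if 0 ≤ ∑ i, A i j * eps S i then 1 else -1

lemma cs_sign {h : ℕ} (A : Matrix (Fin h) (Fin h) ℝ) (S : Finset (Fin h)) (j : Fin h) :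
    cs A S j = 1 ∨ cs A S j = -1 := by
  unfold cs; split_ifs <;> simp

noncomputable def KK {h : ℕ} (A : Matrix (Fin h) (Fin h) ℝ) (S T : Finset (Fin h)) : ℝ :=
  (h : ℝ)⁻¹ * ∑ j, cs A S j * ∑ i, A i j * eps T i

lemma KK_diag {h : ℕ} (A : Matrix (Fin h) (Fin h) ℝ) (S : Finset (Fin h)) :
    KK A S S = (h : ℝ)⁻¹ * ∑ j, |∑ i, A i j * eps S i| := by
  unfold KK cs
  congr 1
  refine Finset.sum_congr rfl fun j _ => ?_
  split_ifs with hj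
  · rw [abs_of_nonneg hj, one_mul]
  · rw [abs_of_neg (not_le.1 hj)]; ring

lemma KK_nonneg {h : ℕ} (A : Matrix (Fin h) (Fin h) ℝ) (S : Finset (Fin h)) : 0 ≤ KK A S S := by
  rw [KK_diag]; positivity

lemma Ex_KK {m : ℕ} (hm : 0 < m) (A : Matrix (Fin (2 * m)) (Fin (2 * m)) ℝ)
    (hs : ∀ i j, A i j = 1 ∨ A i j = -1) : Ex (fun S => KK A S S) = mu m := by
  simp only [KK_diag]
  rw [Ex_mul_left, Ex, Finset.sum_comm]
  simp only [sum_abs_signed _ (fun i => hs i _)]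
  have : (m : ℝ) ≠ 0 := by positivity
  simp [mu]
  field_simp

lemma KK_eq {h : ℕ} (A : Matrix (Fin h) (Fin h) ℝ) (S T : Finset (Fin h)) :
    KK A S T = ∑ i, ((h : ℝ)⁻¹ * (A *ᵥ cs A S) i) * eps T i := by
  simp only [KK, Matrix.mulVec, dotProduct, Finset.mul_sum, Finset.sum_mul]
  rw [Finset.sum_comm]
  refine Finset.sum_congr rfl fun i _ => Finset.sum_congr rfl fun j _ => by ring

lemma Ex_KK_sq {h : ℕ} (hh : 0 < h) (A : Matrix (Fin h) (Fin h) ℝ) (hA : Aᵀ * A = (h : ℝ) • 1)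
    (S : Finset (Fin h)) : Ex (fun T => KK A S T ^ 2) = 1 := by
  simp only [KK_eq]
  rw [Ex_sq]
  simp only [mul_pow, ← Finset.mul_sum]
  have h1 : ∑ i, (A *ᵥ cs A S) i ^ 2 = (A *ᵥ cs A S) ⬝ᵥ (A *ᵥ cs A S) := by
    simp [dotProduct, sq]
  have h2 : cs A S ⬝ᵥ cs A S = h := by
    have : ∀ j, cs A S j * cs A S j = 1 := by
      intro j; rcases cs_sign A S j with h | h <;> simp [h]
    simp [dotProduct, this]
  rw [h1, Matrix.dotProduct_mulVec, Matrix.vecMul_mulVec, ← Matrix.dotProduct_mulVec, hA,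
    Matrix.smul_mulVec, Matrix.one_mulVec, dotProduct_smul, h2]
  have : (h : ℝ) ≠ 0 := by positivity
  simp only [smul_eq_mul]
  field_simp

lemma abs_det_had {h : ℕ} (A : Matrix (Fin h) (Fin h) ℝ) (hA : Aᵀ * A = (h : ℝ) • 1) :
    |A.det| = Real.sqrt ((h : ℝ) ^ h) := by
  have := congrArg Matrix.det hA
  rw [Matrix.det_mul, Matrix.det_transpose, Matrix.det_smul, Matrix.det_one] at this
  simp only [Fintype.card_fin, mul_one] at this
  rw [← this, Real.sqrt_mul_self_eq_abs]

lemma had_bound {h d : ℕ} (hh : 0 < h) (A : Matrix (Fin h) (Fin h) ℝ)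
    (hs : ∀ i j, A i j = 1 ∨ A i j = -1) (hA : Aᵀ * A = (h : ℝ) • 1)
    (b : Fin d → Finset (Fin h)) (s : Fin d → Fin d → ℝ) (hsg : ∀ i j, s i j = 1 ∨ s i j = -1) :
    Real.sqrt ((h : ℝ) ^ h) * (Matrix.of fun i j => KK A (b i) (b j) - s i j).det ≤
      maxDet (h + d) := by
  have h0 : (h : ℝ) ≠ 0 := by positivity
  have hinv : ((h : ℝ)⁻¹ • Aᵀ) * A = 1 := by
    rw [Matrix.smul_mul, hA, smul_smul, inv_mul_cancel₀ h0, one_smul]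
  let _ : Invertible A := _root_.invertibleOfLeftInverse A _ hinv
  have hi : ⅟A = (h : ℝ)⁻¹ • Aᵀ := rfl
  let B : Matrix (Fin h) (Fin d) ℝ := Matrix.of fun i k => eps (b k) i
  let C : Matrix (Fin d) (Fin h) ℝ := Matrix.of fun k j => cs A (b k) j
  let D : Matrix (Fin d) (Fin d) ℝ := Matrix.of s
  let M := Matrix.fromBlocks A B C D
  have hdet : M.det = A.det * (D - C * ⅟A * B).det := Matrix.det_fromBlocks₁₁ A B C D
  have hG : D - C * ⅟A * B = -(Matrix.of fun i j => KK A (b i) (b j) - s i j) := by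
    rw [hi, Matrix.mul_smul, Matrix.smul_mul, Matrix.mul_assoc]
    ext i j
    simp [Matrix.mul_apply, KK, B, C, D]
  have h1 := le_maxDet (n := h + d) (by omega) (Matrix.reindex finSumFinEquiv finSumFinEquiv M) (by
    intro i j
    simp only [Matrix.reindex_apply, Matrix.submatrix_apply]
    generalize finSumFinEquiv.symm i = x
    generalize finSumFinEquiv.symm j = y
    rcases x with x | x <;> rcases y with y | y
    · exact hs x y
    · exact eps_sign _ _
    · exact cs_sign _ _ _
    · exact hsg _ _)
  rw [Matrix.det_reindex_self, hdet, hG, abs_mul, abs_det_had A hA, Matrix.det_neg, abs_mul] at h1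
  simp only [abs_pow, abs_neg, abs_one, one_pow, one_mul] at h1
  exact (mul_le_mul_of_nonneg_left (le_abs_self _) (Real.sqrt_nonneg _)).trans h1

lemma pick (f : ℝ → ℝ) (hf : 2 * f 0 = f 1 + f (-1)) : ∃ s : ℝ, (s = 1 ∨ s = -1) ∧ f 0 ≤ f s := by
  rcases le_or_gt (f 0) (f 1) with h | h
  · exact ⟨1, Or.inl rfl, h⟩
  · exact ⟨-1, Or.inr rfl, by linarith⟩

lemma had1 {m : ℕ} (hm : 0 < m) (A : Matrix (Fin (2 * m)) (Fin (2 * m)) ℝ)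
    (hs : ∀ i j, A i j = 1 ∨ A i j = -1) (hA : Aᵀ * A = ((2 * m : ℕ) : ℝ) • 1) :
    Real.sqrt (((2 * m : ℕ) : ℝ) ^ (2 * m)) * (mu m + 1) ≤ maxDet (2 * m + 1) := by
  obtain ⟨a, ha⟩ := avg1 (KK A) (mu m) (Ex_KK hm A hs)
  have := had_bound (d := 1) (by omega) A hs hA (fun _ => a) (fun _ _ => -1) (by simp)
  refine le_trans ?_ this
  gcongr
  simpa using ha

lemma had2 {m : ℕ} (hm : 0 < m) (A : Matrix (Fin (2 * m)) (Fin (2 * m)) ℝ)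
    (hs : ∀ i j, A i j = 1 ∨ A i j = -1) (hA : Aᵀ * A = ((2 * m : ℕ) : ℝ) • 1) :
    Real.sqrt (((2 * m : ℕ) : ℝ) ^ (2 * m)) * ((mu m + 1) ^ 2 - 1) ≤ maxDet (2 * m + 2) := by
  obtain ⟨a, b, ha⟩ := avg2 (KK A) (mu m) (Ex_KK hm A hs) (Ex_KK_sq (by omega) A hA)
  obtain ⟨s, hs1, h1⟩ := pick (fun s => (KK A a a + 1) * (KK A b b + 1)
    - (KK A a b - s) * (KK A b a)) (by ring)
  obtain ⟨t, ht1, h2⟩ := pick (fun t => (KK A a a + 1) * (KK A b b + 1)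
    - (KK A a b - s) * (KK A b a - t)) (by ring)
  have := had_bound (d := 2) (by omega) A hs hA ![a, b] ![![-1, s], ![t, -1]] (by
    intro i j; fin_cases i <;> fin_cases j <;> simp [hs1, ht1])
  refine le_trans ?_ this
  gcongr
  rw [Matrix.det_fin_two]
  simp at h1 h2 ⊢
  linarith

lemma had3 {m : ℕ} (hm : 0 < m) (A : Matrix (Fin (2 * m)) (Fin (2 * m)) ℝ)
    (hs : ∀ i j, A i j = 1 ∨ A i j = -1) (hA : Aᵀ * A = ((2 * m : ℕ) : ℝ) • 1) :
    Real.sqrt (((2 * m : ℕ) : ℝ) ^ (2 * m)) * (mu m ^ 3 + 3 * mu m ^ 2 - 4)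
      ≤ maxDet (2 * m + 3) := by
  obtain ⟨a, b, c, ha⟩ := avg3 (KK A) (mu m) (KK_nonneg A) (Ex_KK hm A hs)
    (Ex_KK_sq (by omega) A hA)
  let g : ℝ → ℝ → ℝ → ℝ → ℝ → ℝ → ℝ := fun x y z u v w =>
    (KK A a a + 1) * (KK A b b + 1) * (KK A c c + 1)
      - (KK A a a + 1) * ((KK A b c - x) * (KK A c b - y))
      - (KK A b b + 1) * ((KK A a c - z) * (KK A c a - u))
      - (KK A c c + 1) * ((KK A a b - v) * (KK A b a - w))
      + (KK A a b - v) * (KK A b c - x) * (KK A c a - u)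
      + (KK A a c - z) * (KK A c b - y) * (KK A b a - w)
  obtain ⟨x, hx, h1⟩ := pick (fun t => g t 0 0 0 0 0) (by simp only [g]; ring)
  obtain ⟨y, hy, h2⟩ := pick (fun t => g x t 0 0 0 0) (by simp only [g]; ring)
  obtain ⟨z, hz, h3⟩ := pick (fun t => g x y t 0 0 0) (by simp only [g]; ring)
  obtain ⟨u, hu, h4⟩ := pick (fun t => g x y z t 0 0) (by simp only [g]; ring)
  obtain ⟨v, hv, h5⟩ := pick (fun t => g x y z u t 0) (by simp only [g]; ring)
  obtain ⟨w, hw, h6⟩ := pick (fun t => g x y z u v t) (by simp only [g]; ring)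
  have := had_bound (d := 3) (by omega) A hs hA ![a, b, c]
    ![![-1, v, z], ![w, -1, x], ![u, y, -1]] (by
    intro i j; fin_cases i <;> fin_cases j <;> simp [hx, hy, hz, hu, hv, hw])
  refine le_trans ?_ this
  gcongr
  have h7 : g 0 0 0 0 0 0 ≤ g x y z u v w := by linarith
  rw [Matrix.det_fin_three]
  simp [g] at h7 ⊢
  linarith

def M7 : Matrix (Fin 7) (Fin 7) ℝ :=
  Matrix.of fun i j => if j - i = 1 ∨ j - i = 2 ∨ j - i = 4 then 1 else -1

lemma M7_mul : M7 * M7ᵀ = (8 : ℝ) • (1 + Matrix.replicateCol Unit (fun _ : Fin 7 => (-1/8 : ℝ)) *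
    Matrix.replicateRow Unit (fun _ : Fin 7 => (1 : ℝ))) := by
  ext i j
  rw [Matrix.mul_apply, Fin.sum_univ_seven]
  fin_cases i <;> fin_cases j <;> simp [M7, Matrix.mul_apply] <;> norm_num <;>
    simp +decide <;> norm_num

lemma maxDet_seven : 512 ≤ maxDet 7 := by
  have h1 := le_maxDet (by norm_num) M7 (by
    intro i j; simp only [M7, Matrix.of_apply]; split_ifs <;> simp)
  have h2 := congrArg Matrix.det M7_mul
  rw [Matrix.det_mul, Matrix.det_transpose, Matrix.det_smul,
    Matrix.det_one_add_replicateCol_mul_replicateRow] at h2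
  simp [dotProduct] at h2
  norm_num at h2
  have h3 : |M7.det| ^ 2 = 512 ^ 2 := by rw [sq_abs, sq, h2]; norm_num
  have h4 : |M7.det| = 512 := by
    rwa [sq_eq_sq₀ (abs_nonneg _) (by norm_num)] at h3
  linarith

/-! ### Final estimates -/

lemma rpow_half (x : ℝ) (hx : 0 ≤ x) (k : ℕ) : x ^ ((k : ℝ) / 2) = Real.sqrt (x ^ k) := by
  rw [Real.sqrt_eq_rpow, ← Real.rpow_natCast, ← Real.rpow_mul hx]
  congr 1; ring

lemma finish (h d : ℕ) (hh : 0 < h) (T : ℝ) (hT : 0 ≤ T)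
    (hT2 : (2 / Real.pi * ((h : ℝ) + d)) ^ d < T ^ 2)
    (hM : Real.sqrt ((h : ℝ) ^ h) * T ≤ maxDet (h + d)) :
    (2 / (Real.pi * Real.exp 1)) ^ ((d : ℝ) / 2) <
      maxDet (h + d) / ((h + d : ℕ) : ℝ) ^ (((h + d : ℕ) : ℝ) / 2) := by
  have hp := Real.pi_pos
  have hh' : (0:ℝ) < h := by exact_mod_cast hh
  have hnp : (0:ℝ) < ((h + d : ℕ) : ℝ) := by positivity
  rw [rpow_half _ (by positivity), rpow_half _ hnp.le, lt_div_iff₀ (by positivity)]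
  refine lt_of_lt_of_le ?_ hM
  rw [← Real.sqrt_mul (by positivity)]
  conv_rhs => rw [← Real.sqrt_sq hT]
  rw [← Real.sqrt_mul (by positivity)]
  apply Real.sqrt_lt_sqrt (by positivity)
  have e1 : (((h + d : ℕ) : ℝ)) ^ h ≤ (h:ℝ) ^ h * (Real.exp 1) ^ d := by
    have a : ((h + d : ℕ) : ℝ) ≤ h * Real.exp (d / h) := by
      have := Real.add_one_le_exp ((d:ℝ) / h)
      have b : ((h + d : ℕ) : ℝ) = h * (d / h + 1) := by push_cast; field_simp; ring
      rw [b]; gcongr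
    calc (((h + d : ℕ) : ℝ)) ^ h ≤ (h * Real.exp (d / h)) ^ h := by gcongr
      _ = (h:ℝ) ^ h * (Real.exp 1) ^ d := by
        rw [mul_pow, ← Real.exp_nat_mul, ← Real.exp_nat_mul]
        congr 2; field_simp
  calc (2 / (Real.pi * Real.exp 1)) ^ d * ((h + d : ℕ) : ℝ) ^ (h + d)
      = (2 / (Real.pi * Real.exp 1)) ^ d * ((h + d : ℕ) : ℝ) ^ d * ((h + d : ℕ) : ℝ) ^ h := by
        rw [pow_add]; ring
    _ ≤ (2 / (Real.pi * Real.exp 1)) ^ d * ((h + d : ℕ) : ℝ) ^ d *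
        ((h:ℝ) ^ h * (Real.exp 1) ^ d) := by gcongr
    _ = (h:ℝ) ^ h * (2 / Real.pi * ((h : ℝ) + d)) ^ d := by
        have : 2 / Real.pi * ((h : ℝ) + d) =
            2 / (Real.pi * Real.exp 1) * ((h + d : ℕ) : ℝ) * Real.exp 1 := by
          push_cast; field_simp
        rw [this, mul_pow, mul_pow]; ring
    _ < (h:ℝ) ^ h * T ^ 2 := by gcongr

lemma y_hi : 2 / Real.pi < 0.6369 := by
  rw [div_lt_iff₀ Real.pi_pos]; nlinarith [Real.pi_gt_d4]

lemma y_lo : 0.6366 < 2 / Real.pi := by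
  rw [lt_div_iff₀ Real.pi_pos]; nlinarith [Real.pi_lt_d4]

lemma mu_y (m : ℕ) : 2 / Real.pi * (2 * m : ℝ) ^ 2 ≤ mu m ^ 2 * (2 * m + 1) := by
  have := mu_sq m
  rw [div_mul_eq_mul_div, div_le_iff₀ Real.pi_pos]
  linarith

lemma mu_lin (m : ℕ) : 2 / Real.pi * (2 * m - 1 : ℝ) ≤ mu m ^ 2 := by
  have h1 := mu_y m
  have h2 := y_lo
  have : (0:ℝ) < 2 * m + 1 := by positivity
  refine le_of_mul_le_mul_right ?_ this
  nlinarith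

lemma mu_ge_one (m : ℕ) (hm : 2 ≤ m) : 1 ≤ mu m := by
  have h1 := mu_lin m
  have h2 := y_lo
  have : (2:ℝ) ≤ m := by exact_mod_cast hm
  nlinarith [mu_nonneg m]

lemma mu_ge_two (m : ℕ) (hm : 4 ≤ m) : 2.12 ≤ mu m := by
  have h1 := mu_y m
  have h2 := y_lo
  have h4 : (4:ℝ) ≤ m := by exact_mod_cast hm
  have h5 : 64 / 9 * (2 * m + 1 : ℝ) ≤ (2 * m : ℝ) ^ 2 := by nlinarith
  have h6 : 0.6366 * (64 / 9) ≤ mu m ^ 2 := by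
    have : (0:ℝ) < 2 * m + 1 := by positivity
    refine le_of_mul_le_mul_right ?_ this
    nlinarith
  nlinarith [mu_nonneg m]

lemma poly3 (x : ℝ) (hx : 2.12 ≤ x) : (x ^ 2 + 2.55) ^ 3 < (x ^ 3 + 3 * x ^ 2 - 4) ^ 2 := by
  obtain ⟨t, ht, rfl⟩ : ∃ t : ℝ, 0 ≤ t ∧ x = 2.12 + t := ⟨x - 2.12, by linarith, by ring⟩
  rw [← sub_pos]
  ring_nf
  positivity

theorem normalized_maxDet_lower_bound_small_d (h d n : ℕ)
    (hh : 4 ≤ h) (hH : IsHadamardOrder h) (hd : d ≤ 3) (hn : n = h + d) :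
    maxDet n / (n : ℝ) ^ ((n : ℝ) / 2) ≥
      (2 / (Real.pi * Real.exp 1)) ^ ((d : ℝ) / 2) ∧
    (0 < d →
      maxDet n / (n : ℝ) ^ ((n : ℝ) / 2) >
        (2 / (Real.pi * Real.exp 1)) ^ ((d : ℝ) / 2)) := by
  subst hn
  have h4 := four_dvd hh hH
  obtain ⟨A, hs, hA⟩ := hH
  rcases Nat.eq_zero_or_pos d with rfl | hd0
  · refine ⟨?_, fun h => absurd h (by simp)⟩
    have h1 := had_bound (d := 0) (by omega) A hs hA (fun _ => ∅) (fun _ _ => 1) (by simp)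
    rw [Matrix.det_fin_zero, mul_one] at h1
    have hp : (0:ℝ) < h := by positivity
    simp only [Nat.cast_zero, zero_div, Real.rpow_zero, add_zero, ge_iff_le] at h1 ⊢
    rw [rpow_half _ hp.le, le_div_iff₀ (by positivity), one_mul]
    exact h1
  · suffices H : (2 / (Real.pi * Real.exp 1)) ^ ((d : ℝ) / 2) <
      maxDet (h + d) / ((h + d : ℕ) : ℝ) ^ (((h + d : ℕ) : ℝ) / 2) from ⟨H.le, fun _ => H⟩
    obtain ⟨m, rfl⟩ : ∃ m, h = 2 * m := by
      obtain ⟨q, hq⟩ := h4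
      exact ⟨2 * q, by omega⟩
    have hm2 : 2 ≤ m := by omega
    have m1 := mu_ge_one m hm2
    have ml := mu_lin m
    have yl := y_lo
    have yh := y_hi
    have hmr : (2:ℝ) ≤ m := by exact_mod_cast hm2
    interval_cases d
    · refine finish (2 * m) 1 (by omega) (mu m + 1) (by linarith) ?_ (had1 (by omega) A hs hA)
      push_cast
      nlinarith
    · refine finish (2 * m) 2 (by omega) ((mu m + 1) ^ 2 - 1) (by nlinarith) ?_
        (had2 (by omega) A hs hA)
      push_cast
      have : 0 ≤ 2 / Real.pi * (2 * (m:ℝ) + 2) := by positivity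
      gcongr
      nlinarith
    · by_cases hm4 : 4 ≤ m
      · have m2 := mu_ge_two m hm4
        refine finish (2 * m) 3 (by omega) (mu m ^ 3 + 3 * mu m ^ 2 - 4)
          (by nlinarith [mu_nonneg m, pow_pos (by linarith : 0 < mu m) 3]) ?_
          (had3 (by omega) A hs hA)
        refine lt_of_le_of_lt ?_ (poly3 _ m2)
        push_cast
        gcongr
        nlinarith
      · obtain rfl : m = 2 := by omega
        refine finish (2 * 2) 3 (by omega) 32 (by norm_num) ?_ ?_
        · push_cast
          calc (2 / Real.pi * (4 + 3)) ^ 3 ≤ (0.6369 * (4 + 3)) ^ 3 := by gcongr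
            _ < (32:ℝ) ^ 2 := by norm_num
        · refine le_trans (le_of_eq ?_) maxDet_seven
          rw [show (((2 * 2 : ℕ) : ℝ) ^ (2 * 2)) = 16 ^ 2 by norm_num,
            Real.sqrt_sq (by norm_num)]
          norm_num
end
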